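/- Let k, n be natural numbers with k ≥ 15 and n ≥ k + 20, and let s, t be natural numbers with s + t = k - 6 and 1 ≤ s ≤ t + 2. Let Q(s,t) denote the 7×7 matrix [[0,-1,1,-2,t,s,u],[-1,0,-1,2,t,-s,u],[1,-1,0,-2,-t,s,u],[-1,1,-1,1,t,s,u],[1,1,-1,2,t-1,s,u],[1,-1,1,2,t,s-1,u],[1,1,1,2,t,s,u-1]] with u = n - k + 1 (entries viewed as reals). Then the largest real root of det(λI - Q(s-1, t+1)) is strictly greater than the largest real root of det(λI - Q(s,t)). -/

import Mathlib

/-- The 7×7 equitable quotient matrix `Q(s,t)` with real parameters. -/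
def Q1 (s t u : ℝ) : Matrix (Fin 7) (Fin 7) ℝ :=
  !![0, -1, 1, -2, t, s, u;
     -1, 0, -1, 2, t, -s, u;
     1, -1, 0, -2, -t, s, u;
     -1, 1, -1, 1, t, s, u;
     1, 1, -1, 2, t - 1, s, u;
     1, -1, 1, 2, t, s - 1, u;
     1, 1, 1, 2, t, s, u - 1]

/-- Explicit characteristic polynomial. -/
def charF (s t u x : ℝ) : ℝ :=
      (1)*x^7 + (-1)*x^6*s + (-1)*x^6*t + (-1)*x^6*u + (2)*x^6 + (-6)*x^5*s + (-6)*x^5*t + (-6)*x^5*u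
      + (-9)*x^5 + (8)*x^4*s*t + (4)*x^4*s*u + (9)*x^4*s + (4)*x^4*t*u + (1)*x^4*t + (9)*x^4*u +
      (-40)*x^4 + (32)*x^3*s*t + (16)*x^3*s*u + (76)*x^3*s + (16)*x^3*t*u + (44)*x^3*t + (76)*x^3*u +
      (-65)*x^3 + (-16)*x^2*s*t*u + (-16)*x^2*s*t + (-40)*x^2*s*u + (129)*x^2*s + (-24)*x^2*t*u +
      (81)*x^2*t + (129)*x^2*u + (-54)*x^2 + (-32)*x*s*t*u + (-96)*x*s*t + (-112)*x*s*u + (90)*x*s +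
      (-80)*x*t*u + (58)*x*t + (90)*x*u + (-23)*x + (112)*s*t*u + (-56)*s*t + (-60)*s*u + (23)*s +
      (-44)*t*u + (15)*t + (23)*u + (-4)

set_option maxHeartbeats 4000000 in
lemma det_eq (s t u x : ℝ) :
    (x • (1 : Matrix (Fin 7) (Fin 7) ℝ) - Q1 s t u).det = charF s t u x := by
  have h : x • (1 : Matrix (Fin 7) (Fin 7) ℝ) - Q1 s t u =
      !![x, 1, -1, 2, -t, -s, -u;
         1, x, 1, -2, -t, s, -u;
         -1, 1, x, 2, t, -s, -u;
         1, -1, 1, x - 1, -t, -s, -u;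
         -1, -1, 1, -2, x - (t - 1), -s, -u;
         -1, 1, -1, -2, -t, x - (s - 1), -u;
         -1, -1, -1, -2, -t, -s, x - (u - 1)] := by
    ext i j
    fin_cases i <;> fin_cases j <;> simp [Q1, Matrix.one_apply]
  rw [h]
  simp [Matrix.det_succ_row_zero, Fin.sum_univ_succ, Fin.succAbove]
  unfold charF
  ring

/-- The part of `charF` that depends only on `m = s + t + u`. -/
def baseF (m x : ℝ) : ℝ :=
  x^7 - x^6*m + 2*x^6 - 6*x^5*m - 9*x^5 + 9*x^4*m - 40*x^4 + 76*x^3*m - 65*x^3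
    + 129*x^2*m - 54*x^2 + 90*x*m - 23*x + 23*m - 4

lemma charF_split (s t u x : ℝ) :
    charF s t u x = baseF (s + t + u) x - 8 * t * (x + 1)^4
      + s * t * ((8*x^4 + 32*x^3 - 16*x^2 - 96*x - 56) + u * (-16*x^2 - 32*x + 112))
      + s * u * (4*x^4 + 16*x^3 - 40*x^2 - 112*x - 60)
      + t * u * (4*x^4 + 16*x^3 - 24*x^2 - 80*x - 44) := by
  unfold charF baseF
  ring

lemma baseF_pos (m y : ℝ) (hm : 0 < m) (hy : 0 ≤ y) :
    0 < baseF m (m + 4 + y) - 8 * m * (m + 4 + y + 1)^4 := by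
  have h : baseF m (m + 4 + y) - 8 * m * (m + 4 + y + 1)^4 =
      y^7 + 6*y^6*m + 30*y^6 + 15*y^5*m^2 + 150*y^5*m + 375*y^5 + 20*y^4*m^3 + 300*y^4*m^2
      + 1516*y^4*m + 2500*y^4 + 15*y^3*m^4 + 300*y^3*m^3 + 2314*y^3*m^2 + 7820*y^3*m + 9375*y^3
      + 6*y^2*m^5 + 150*y^2*m^4 + 1596*y^2*m^3 + 8460*y^2*m^2 + 21150*y^2*m + 18750*y^2
      + y*m^6 + 30*y*m^5 + 439*y*m^4 + 3460*y*m^3 + 14175*y*m^2 + 26750*y*m + 15625*y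
      + 16*m^5 + 320*m^4 + 2400*m^3 + 8000*m^2 + 10000*m := by
    unfold baseF
    ring
  rw [h]
  positivity

lemma baseF_neg (m : ℝ) (hm : 21 ≤ m) :
    2 * baseF m (m + 1) + (4*(m + 1)^4 + 16*(m + 1)^3) * m^2 < 0 := by
  obtain ⟨w, rfl⟩ : ∃ w, m = w + 21 := ⟨m - 21, by ring⟩
  have hw : 0 ≤ w := by linarith
  have h : 2 * baseF (w + 21) (w + 21 + 1) +
      (4*(w + 21 + 1)^4 + 16*(w + 21 + 1)^3) * (w + 21)^2 =
      -(2*w^6 + 244*w^5 + 12294*w^4 + 326840*w^3 + 4823290*w^2 + 37330572*w + 117775734) := by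
    unfold baseF
    ring
  rw [h, neg_lt_zero]
  positivity

lemma charF_pos (s t u y : ℝ) (hs : 0 ≤ s) (ht : 0 ≤ t) (hu : 0 < u) (hy : 0 ≤ y) :
    0 < charF s t u (s + t + u + 4 + y) := by
  have hb := baseF_pos (s + t + u) y (by linarith) hy
  rw [charF_split]
  obtain ⟨x, hx⟩ : ∃ x, x = s + t + u + 4 + y := ⟨_, rfl⟩
  rw [← hx] at hb ⊢
  have hx4 : 0 ≤ x - 4 := by linarith
  have hux : 0 ≤ x - u := by linarith
  have hx0 : 0 ≤ x := by linarith
  have h1 : 8 * t * (x + 1)^4 ≤ 8 * (s + t + u) * (x + 1)^4 := by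
    gcongr
    linarith
  have h2 : 0 ≤ (8*x^4 + 32*x^3 - 16*x^2 - 96*x - 56) + u * (-16*x^2 - 32*x + 112) := by
    have e : (8*x^4 + 32*x^3 - 16*x^2 - 96*x - 56) + u * (-16*x^2 - 32*x + 112) =
        (x - u) * (16*x^2 + 32*x) + 112 * u
        + (8*(x-4)^4 + 144*(x-4)^3 + 912*(x-4)^2 + 2336*(x-4) + 1864) := by ring
    rw [e]
    positivity
  have h3 : 0 ≤ 4*x^4 + 16*x^3 - 40*x^2 - 112*x - 60 := by
    have e : 4*x^4 + 16*x^3 - 40*x^2 - 112*x - 60 =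
        4*(x-4)^4 + 80*(x-4)^3 + 536*(x-4)^2 + 1360*(x-4) + 900 := by ring
    rw [e]
    positivity
  have h4 : 0 ≤ 4*x^4 + 16*x^3 - 24*x^2 - 80*x - 44 := by
    have := sq_nonneg x
    nlinarith
  have := mul_nonneg (mul_nonneg hs ht) h2
  have := mul_nonneg (mul_nonneg hs hu.le) h3
  have := mul_nonneg (mul_nonneg ht hu.le) h4
  linarith

lemma charF_neg (s t u : ℝ) (hs : 0 ≤ s) (ht : 0 ≤ t) (hu : 21 ≤ u) :
    charF s t u (s + t + u + 1) < 0 := by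
  have hb := baseF_neg (s + t + u) (by linarith)
  rw [charF_split]
  obtain ⟨x, hx⟩ : ∃ x, x = s + t + u + 1 := ⟨_, rfl⟩
  rw [← hx] at hb ⊢
  have hx4 : 21 ≤ x := by linarith
  have hx0 : 0 ≤ x := by linarith
  have hu0 : 0 ≤ u := by linarith
  have h0 : 0 ≤ 8 * t * (x + 1)^4 := by positivity
  have hc4 : 0 ≤ u * (16*x^2 + 32*x - 112) := mul_nonneg hu0 (by nlinarith)
  have h1 : s * t * ((8*x^4 + 32*x^3 - 16*x^2 - 96*x - 56) + u * (-16*x^2 - 32*x + 112)) ≤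
      s * t * (2 * (4*x^4 + 16*x^3)) :=
    mul_le_mul_of_nonneg_left (by nlinarith [sq_nonneg x]) (by positivity)
  have h2 : s * u * (4*x^4 + 16*x^3 - 40*x^2 - 112*x - 60) ≤ s * u * (4*x^4 + 16*x^3) :=
    mul_le_mul_of_nonneg_left (by nlinarith [sq_nonneg x]) (by positivity)
  have h3 : t * u * (4*x^4 + 16*x^3 - 24*x^2 - 80*x - 44) ≤ t * u * (4*x^4 + 16*x^3) :=
    mul_le_mul_of_nonneg_left (by nlinarith [sq_nonneg x]) (by positivity)
  have h5 : (4*x^4 + 16*x^3) * (2 * (2 * (s * t) + s * u + t * u)) ≤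
      (4*x^4 + 16*x^3) * (s + t + u)^2 :=
    mul_le_mul_of_nonneg_left (by nlinarith [sq_nonneg (s - t), sq_nonneg u]) (by positivity)
  linarith

lemma charF_cont (s t u : ℝ) : Continuous (charF s t u) := by
  unfold charF
  fun_prop

lemma charF_lt (s t u x : ℝ) (hst : s ≤ t + 2) (hu : 21 ≤ u) (hx : u ≤ x) :
    charF (s - 1) (t + 1) u x < charF s t u x := by
  have h : charF s t u x - charF (s - 1) (t + 1) u x =
      8 * (t + 2 - s) * (x^2 * (x^2 - 2 * u - 2) + 4 * x * (x^2 - u - 3) + 7 * (2 * u - 1))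
        + 64 * ((x + 1)^2 - 2 * u) := by
    unfold charF
    ring
  have hw : 0 ≤ t + 2 - s := by linarith
  have h1 : 0 ≤ x^2 - 2 * u - 2 := by nlinarith
  have h2 : 0 ≤ x^2 - u - 3 := by nlinarith
  have h3 : 0 ≤ 2 * u - 1 := by linarith
  have h4 : 0 < (x + 1)^2 - 2 * u := by nlinarith
  have hx0 : 0 ≤ x := by linarith
  have : 0 < charF s t u x - charF (s - 1) (t + 1) u x := by
    rw [h]
    positivity
  linarith

/-- A negative value at `c` yields a greatest root, which lies beyond `c`. -/
lemma exists_greatest (s t u c : ℝ) (hs : 0 ≤ s) (ht : 0 ≤ t) (hu : 0 < u)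
    (hc : charF s t u c < 0) :
    ∃ a, IsGreatest {x : ℝ | charF s t u x = 0} a ∧ c < a := by
  have hpos : ∀ x, s + t + u + 4 ≤ x → 0 < charF s t u x := by
    intro x hx
    have h := charF_pos s t u (x - (s + t + u + 4)) hs ht hu (by linarith)
    rwa [add_sub_cancel] at h
  have hcM : c ≤ s + t + u + 4 := by
    by_contra hlt
    have := hpos c (by linarith)
    linarith
  obtain ⟨r, hr, hr0⟩ := intermediate_value_Icc hcM (charF_cont s t u).continuousOn
    (show (0 : ℝ) ∈ Set.Icc _ _ from ⟨hc.le, (hpos _ le_rfl).le⟩)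
  have hbdd : BddAbove {x : ℝ | charF s t u x = 0} := by
    refine ⟨s + t + u + 4, fun x hx => ?_⟩
    by_contra hlt
    have h1 := hpos x (by linarith)
    have h2 : charF s t u x = 0 := hx
    linarith
  have hcl : IsClosed {x : ℝ | charF s t u x = 0} :=
    isClosed_eq (charF_cont s t u) continuous_const
  refine ⟨_, hcl.isGreatest_csSup ⟨r, hr0⟩ hbdd, ?_⟩
  have h1 : r ≤ sSup {x : ℝ | charF s t u x = 0} := le_csSup hbdd hr0
  rcases hr.1.lt_or_eq with h2 | h2
  · linarith
  · rw [h2] at hc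
    linarith

theorem largest_root_increases (k n s t : ℕ) (hk : 15 ≤ k) (hn : k + 20 ≤ n)
    (hst : s + t = k - 6) (hs1 : 1 ≤ s) (hs2 : s ≤ t + 2) :
    ∃ a b : ℝ,
      IsGreatest {x : ℝ | (x • (1 : Matrix (Fin 7) (Fin 7) ℝ) -
        Q1 ((s : ℝ) - 1) ((t : ℝ) + 1) ((n : ℝ) - k + 1)).det = 0} a ∧
      IsGreatest {x : ℝ | (x • (1 : Matrix (Fin 7) (Fin 7) ℝ) -
        Q1 (s : ℝ) (t : ℝ) ((n : ℝ) - k + 1)).det = 0} b ∧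
      b < a := by
  simp only [det_eq]
  have hs : (1 : ℝ) ≤ s := by exact_mod_cast hs1
  have ht : (0 : ℝ) ≤ t := Nat.cast_nonneg t
  have hst2 : (s : ℝ) ≤ t + 2 := by exact_mod_cast hs2
  have hn2 : (k : ℝ) + 20 ≤ n := by exact_mod_cast hn
  obtain ⟨u, hu⟩ : ∃ u : ℝ, u = (n : ℝ) - k + 1 := ⟨_, rfl⟩
  rw [← hu]
  have hu21 : 21 ≤ u := by linarith
  have hneg := charF_neg s t u (by linarith) ht hu21
  obtain ⟨b, hb, hcb⟩ := exists_greatest s t u _ (by linarith) ht (by linarith) hneg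
  have hlt := charF_lt s t u b hst2 hu21 (by linarith)
  have hb0 : charF s t u b = 0 := hb.1
  rw [hb0] at hlt
  obtain ⟨a, ha, hba⟩ :=
    exists_greatest ((s : ℝ) - 1) (t + 1) u b (by linarith) (by linarith) (by linarith) hlt
  exact ⟨a, b, ha, hb, hba⟩
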